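/- Consider the QCQP problem. Assume there exists γ' ∈ ℝᵐ with γ'_k ≥ 0 for all k, γ' ≠ 0, such that A_J + Σ_{k=1}^m γ'_k A_k is positive semidefinite. Let x* be a global minimizer of the QCQP, set f_0(x) := J(x) − J(x*), and assume the set Ω₀ associated with f_0, f_1, …, f_m is convex. Assume moreover the Slater condition: there exists a point x₀ ∈ ℝⁿ with f_k(x₀) < 0 for all k = 1, …, m. Then there exist multipliers γ_1, …, γ_m ≥ 0 such that: (i) (A_J + Σ_{k=1}^m γ_k A_k) x* + (b_J + Σ_{k=1}^m γ_k b_k) = 0; (ii) γ_k f_k(x*) = 0 for k = 1, …, m; (iii) A_J + Σ_{k=1}^m γ_k A_k is positive semidefinite. -/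

import Mathlib

open Matrix

/-!
Optimality of `xstar` says that `Ω₀` misses the origin. As `Ω₀` is open and convex, some linear
functional is positive on it; as `Ω₀` is closed under increasing coordinates, this functional has
nonnegative coefficients. Slater's condition puts a point `(s, 0)` into `Ω₀`, so the coefficient of
the objective is nonzero and can be normalized to `1`: the others are then multipliers `γ` for which
the Lagrangian `J + ∑ γₖ fₖ` attains its global minimum over the whole space at `xstar`. Since the
Lagrangian is quadratic, this forces a vanishing gradient and a positive semidefinite Hessian.
-/

section Separation

variable {X ι : Type*}

/-- The set `Ω₀` of the values strictly dominating some `(f₀ x, f x)`. The objective coordinate is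
kept apart from the constraint coordinates, so that the constraints may have any index type. -/
def strictUpperImage (f₀ : X → ℝ) (f : ι → X → ℝ) : Set (ℝ × (ι → ℝ)) :=
  {v | ∃ x, f₀ x < v.1 ∧ ∀ k, f k x < v.2 k}

variable {f₀ : X → ℝ} {f : ι → X → ℝ}

lemma isOpen_strictUpperImage [Finite ι] : IsOpen (strictUpperImage f₀ f) := by
  have hunion : strictUpperImage f₀ f =
      ⋃ x, ({v | f₀ x < v.1} ∩ ⋂ k, {v | f k x < v.2 k}) := by
    ext v
    simp [strictUpperImage]
  rw [hunion]
  refine isOpen_iUnion fun x => .inter ?_ (isOpen_iInter_of_finite fun k => ?_)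
  · exact isOpen_lt continuous_const continuous_fst
  · exact isOpen_lt continuous_const (by fun_prop)

lemma isUpperSet_strictUpperImage : IsUpperSet (strictUpperImage f₀ f) := by
  rintro v w hvw ⟨x, hx₀, hx⟩
  exact ⟨x, hx₀.trans_le hvw.1, fun k => (hx k).trans_le (hvw.2 k)⟩

lemma nonneg_of_pos_on_isUpperSet {𝕜 E : Type*} [Field 𝕜] [LinearOrder 𝕜] [IsStrictOrderedRing 𝕜]
    [AddCommGroup E] [PartialOrder E] [IsOrderedAddMonoid E] [Module 𝕜 E] [PosSMulMono 𝕜 E]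
    {s : Set E} (hs : IsUpperSet s) (hne : s.Nonempty) {g : E →ₗ[𝕜] 𝕜}
    (hg : ∀ v ∈ s, 0 < g v) {w : E} (hw : 0 ≤ w) : 0 ≤ g w := by
  obtain ⟨v, hv⟩ := hne
  by_contra! hneg
  have ht : 0 ≤ g v / -g w := div_nonneg (hg v hv).le (neg_nonneg.2 hneg.le)
  have hpos := hg _ (hs (le_add_of_nonneg_right (smul_nonneg ht hw)) hv)
  have hzero : g (v + (g v / -g w) • w) = 0 := by
    rw [map_add, map_smul, smul_eq_mul]
    field_simp [hneg.ne]
    ring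
  exact hpos.ne' hzero

lemma nonneg_apply_of_pos_on_strictUpperImage {g : ℝ × (ι → ℝ) →ₗ[ℝ] ℝ}
    (hg : ∀ v ∈ strictUpperImage f₀ f, 0 < g v) (x : X) : 0 ≤ g (f₀ x, fun k => f k x) := by
  have hmem (t : ℝ) (ht : 0 < t) : (f₀ x, fun k => f k x) + t • 1 ∈ strictUpperImage f₀ f :=
    ⟨x, by simpa using ht, fun k => by simpa using ht⟩
  have hlim : Filter.Tendsto (fun t : ℝ => g ((f₀ x, fun k => f k x) + t • 1))
      (nhdsWithin 0 (Set.Ioi 0)) (nhds (g (f₀ x, fun k => f k x))) := by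
    simp only [map_add, map_smul, smul_eq_mul]
    exact tendsto_nhdsWithin_of_tendsto_nhds (Continuous.tendsto' (by fun_prop) _ _ (by simp))
  exact ge_of_tendsto hlim (Filter.eventually_of_mem self_mem_nhdsWithin
    fun t ht => (hg _ (hmem t ht)).le)

lemma linearMap_prod_pi_apply {R : Type*} [CommSemiring R] [Fintype ι] [DecidableEq ι]
    (g : R × (ι → R) →ₗ[R] R) (a : R) (v : ι → R) :
    g (a, v) = g (1, 0) * a + ∑ k, g (0, Pi.single k 1) * v k := by
  have hfst : g (a, 0) = g (1, 0) * a := by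
    simpa [mul_comm] using g.map_smul a (1, 0)
  have hsnd : g (0, v) = ∑ k, g (0, Pi.single k 1) * v k := by
    have hsingle (k : ι) : (fun j => if k = j then (1 : R) else 0) = Pi.single k 1 := by
      ext j
      simp [Pi.single_apply, eq_comm]
    simpa [mul_comm, hsingle] using (g ∘ₗ LinearMap.inr R R (ι → R)).pi_apply_eq_sum_univ v
  rw [← hfst, ← hsnd, ← map_add]
  simp

lemma exists_pos_on_strictUpperImage [Finite ι] (hΩ : Convex ℝ (strictUpperImage f₀ f))
    (himp : ∀ x, (∀ k, f k x < 0) → 0 ≤ f₀ x) :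
    ∃ g : ℝ × (ι → ℝ) →ₗ[ℝ] ℝ, ∀ v ∈ strictUpperImage f₀ f, 0 < g v := by
  have hzero : 0 ∉ strictUpperImage f₀ f := fun ⟨x, hx₀, hx⟩ => (himp x hx).not_gt hx₀
  obtain ⟨g, hg⟩ := geometric_hahn_banach_point_open hΩ isOpen_strictUpperImage hzero
  exact ⟨g, fun v hv => by simpa using hg v hv⟩

theorem exists_nonneg_multipliers [Fintype ι] (hΩ : Convex ℝ (strictUpperImage f₀ f))
    (himp : ∀ x, (∀ k, f k x < 0) → 0 ≤ f₀ x) (hslater : ∃ x, ∀ k, f k x < 0) :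
    ∃ γ : ι → ℝ, (∀ k, 0 ≤ γ k) ∧ ∀ x, 0 ≤ f₀ x + ∑ k, γ k * f k x := by
  classical
  obtain ⟨g, hg⟩ := exists_pos_on_strictUpperImage hΩ himp
  obtain ⟨x₀, hx₀⟩ := hslater
  have hmem : (f₀ x₀ + 1, 0) ∈ strictUpperImage f₀ f := ⟨x₀, lt_add_one _, hx₀⟩
  have hnonneg {w : ℝ × (ι → ℝ)} (hw : 0 ≤ w) : 0 ≤ g w :=
    nonneg_of_pos_on_isUpperSet isUpperSet_strictUpperImage ⟨_, hmem⟩ hg hw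
  have hpos : 0 < g (1, 0) := by
    refine (hnonneg (Prod.mk_le_mk.2 ⟨zero_le_one, le_rfl⟩)).lt_of_ne' fun h => ?_
    simpa [linearMap_prod_pi_apply g (f₀ x₀ + 1), h] using hg _ hmem
  refine ⟨fun k => g (0, Pi.single k 1) / g (1, 0), fun k => ?_, fun x => ?_⟩
  · exact div_nonneg (hnonneg (Prod.mk_le_mk.2 ⟨le_rfl, Pi.single_nonneg.2 zero_le_one⟩)) hpos.le
  · have hx := div_nonneg (nonneg_apply_of_pos_on_strictUpperImage hg x) hpos.le
    rw [linearMap_prod_pi_apply, add_div, mul_div_cancel_left₀ _ hpos.ne', Finset.sum_div] at hx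
    simpa only [div_mul_eq_mul_div] using hx

end Separation

lemma mul_eq_zero_of_sum_mul_nonneg {R ι : Type*} [Ring R] [PartialOrder R] [IsOrderedRing R]
    [Fintype ι] {γ u : ι → R} (hγ : ∀ k, 0 ≤ γ k) (hu : ∀ k, u k ≤ 0)
    (hsum : 0 ≤ ∑ k, γ k * u k) (k : ι) : γ k * u k = 0 := by
  have hle : ∀ i ∈ Finset.univ, γ i * u i ≤ 0 := fun i _ =>
    mul_nonpos_of_nonneg_of_nonpos (hγ i) (hu i)
  exact (Finset.sum_eq_zero_iff_of_nonpos hle).1 (le_antisymm (Finset.sum_nonpos hle) hsum) k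
    (Finset.mem_univ k)

lemma nonneg_and_eq_zero_of_forall_quadratic_nonneg {𝕜 : Type*} [Field 𝕜] [LinearOrder 𝕜]
    [IsStrictOrderedRing 𝕜] {p q : 𝕜} (h : ∀ t, 0 ≤ p * (t * t) + q * t) : 0 ≤ p ∧ q = 0 := by
  have hdiscrim : discrim p q 0 ≤ 0 := discrim_le_zero fun t => by simpa using h t
  have hq : q = 0 := by simpa [discrim, sq_nonpos_iff] using hdiscrim
  exact ⟨by simpa [hq] using h 1, hq⟩

lemma isSymm_add_sum_smul {ι κ R α : Type*} [AddCommMonoid α] [SMul R α] [Fintype κ]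
    {M₀ : Matrix ι ι α} {M : κ → Matrix ι ι α} (hM₀ : M₀.IsSymm) (hM : ∀ k, (M k).IsSymm)
    (γ : κ → R) : (M₀ + ∑ k, γ k • M k).IsSymm := by
  simp only [IsSymm, transpose_add, transpose_sum, transpose_smul, hM₀.eq, (hM _).eq]

section Quadratic

variable {ι R : Type*} [Fintype ι] [CommRing R]

/-- The quadratic function `x ↦ xᵀ M x + 2 bᵀ x + c`, the form of the objective and of each
constraint. Because of the factor `2`, its gradient for symmetric `M` is `2 (M x + b)`. -/
def quadraticFun (M : Matrix ι ι R) (b : ι → R) (c : R) (x : ι → R) : R :=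
  x ⬝ᵥ M *ᵥ x + 2 * (b ⬝ᵥ x) + c

lemma quadraticFun_add_sum_mul {κ : Type*} [Fintype κ] (M₀ : Matrix ι ι R)
    (M : κ → Matrix ι ι R) (b₀ : ι → R) (b : κ → ι → R) (c₀ : R) (c γ : κ → R) (x : ι → R) :
    quadraticFun M₀ b₀ c₀ x + ∑ k, γ k * quadraticFun (M k) (b k) (c k) x =
      quadraticFun (M₀ + ∑ k, γ k • M k) (b₀ + ∑ k, γ k • b k) (c₀ + ∑ k, γ k * c k) x := by
  simp only [quadraticFun, add_mulVec, sum_mulVec, smul_mulVec, dotProduct_add, add_dotProduct,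
    dotProduct_sum, sum_dotProduct, smul_dotProduct, dotProduct_smul, smul_eq_mul, mul_add,
    Finset.sum_add_distrib, Finset.mul_sum, mul_left_comm (γ _) 2]
  ring

lemma quadraticFun_add_smul {M : Matrix ι ι R} (hM : M.IsSymm) (b : ι → R) (c : R)
    (x d : ι → R) (t : R) :
    quadraticFun M b c (x + t • d) =
      quadraticFun M b c x + (d ⬝ᵥ M *ᵥ d * (t * t) + 2 * ((M *ᵥ x + b) ⬝ᵥ d) * t) := by
  have hcross : x ⬝ᵥ M *ᵥ d = M *ᵥ x ⬝ᵥ d := by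
    rw [dotProduct_mulVec, ← mulVec_transpose, hM.eq]
  simp only [quadraticFun, mulVec_add, mulVec_smul, dotProduct_add, add_dotProduct,
    smul_dotProduct, dotProduct_smul, smul_eq_mul, hcross, dotProduct_comm d (M *ᵥ x)]
  ring

variable {M : Matrix ι ι ℝ} {b x : ι → ℝ} {c : ℝ}

lemma directional_conditions_of_forall_quadraticFun_le (hM : M.IsSymm)
    (hmin : ∀ y, quadraticFun M b c x ≤ quadraticFun M b c y) (d : ι → ℝ) :
    0 ≤ d ⬝ᵥ M *ᵥ d ∧ 2 * ((M *ᵥ x + b) ⬝ᵥ d) = 0 :=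
  nonneg_and_eq_zero_of_forall_quadratic_nonneg fun t => by
    simpa [quadraticFun_add_smul hM] using hmin (x + t • d)

lemma mulVec_add_eq_zero_of_forall_quadraticFun_le (hM : M.IsSymm)
    (hmin : ∀ y, quadraticFun M b c x ≤ quadraticFun M b c y) : M *ᵥ x + b = 0 := by
  have hself := (directional_conditions_of_forall_quadraticFun_le hM hmin (M *ᵥ x + b)).2
  exact dotProduct_self_eq_zero.1 ((mul_eq_zero_iff_left two_ne_zero).1 hself)

lemma posSemidef_of_forall_quadraticFun_le (hM : M.IsSymm)
    (hmin : ∀ y, quadraticFun M b c x ≤ quadraticFun M b c y) : M.PosSemidef :=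
  .of_dotProduct_mulVec_nonneg (isHermitian_iff_isSymm.2 hM) fun d =>
    (directional_conditions_of_forall_quadraticFun_le hM hmin d).1

end Quadratic

theorem stmt_3_general {ι κ : Type*} [Fintype ι] [Fintype κ]
    {AJ : Matrix ι ι ℝ} {A : κ → Matrix ι ι ℝ} (hAJ : AJ.IsSymm) (hA : ∀ k, (A k).IsSymm)
    {bJ : ι → ℝ} {b : κ → ι → ℝ} {cJ : ℝ} {c : κ → ℝ}
    {J : (ι → ℝ) → ℝ} {f : κ → (ι → ℝ) → ℝ}
    (hJ : ∀ x, J x = quadraticFun AJ bJ cJ x)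
    (hf : ∀ k x, f k x = quadraticFun (A k) (b k) (c k) x)
    {xstar : ι → ℝ} (hfeas : ∀ k, f k xstar ≤ 0)
    (hmin : ∀ x, (∀ k, f k x ≤ 0) → J xstar ≤ J x)
    (hΩ : Convex ℝ (strictUpperImage (fun x => J x - J xstar) f))
    (hslater : ∃ x₀, ∀ k, f k x₀ < 0) :
    ∃ γ : κ → ℝ, (∀ k, 0 ≤ γ k) ∧
      (AJ + ∑ k, γ k • A k) *ᵥ xstar + (bJ + ∑ k, γ k • b k) = 0 ∧
      (∀ k, γ k * f k xstar = 0) ∧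
      (AJ + ∑ k, γ k • A k).PosSemidef := by
  obtain ⟨γ, hγ, hlagrangian⟩ := exists_nonneg_multipliers hΩ
    (fun x hx => sub_nonneg.2 (hmin x fun k => (hx k).le)) hslater
  have hslack : ∀ k, γ k * f k xstar = 0 :=
    mul_eq_zero_of_sum_mul_nonneg hγ hfeas (by simpa using hlagrangian xstar)
  have hlagrangian_min (y : ι → ℝ) :
      J xstar + ∑ k, γ k * f k xstar ≤ J y + ∑ k, γ k * f k y := by
    simp only [hslack, Finset.sum_const_zero]
    linarith [hlagrangian y]
  simp only [hJ, hf, quadraticFun_add_sum_mul] at hlagrangian_min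
  have hsymm : (AJ + ∑ k, γ k • A k).IsSymm := isSymm_add_sum_smul hAJ hA γ
  exact ⟨γ, hγ, mulVec_add_eq_zero_of_forall_quadraticFun_le hsymm hlagrangian_min, hslack,
    posSemidef_of_forall_quadraticFun_le hsymm hlagrangian_min⟩

/-- Necessity of the KKT conditions for a global minimizer of a general QCQP,
under the PSD-combination assumption, convexity of Ω₀, and the Slater condition. -/
theorem stmt_3 (n m : ℕ)
    (AJ : Matrix (Fin n) (Fin n) ℝ) (A : Fin m → Matrix (Fin n) (Fin n) ℝ)
    (hAJ : AJ.IsSymm) (hA : ∀ k, (A k).IsSymm)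
    (bJ : Fin n → ℝ) (b : Fin m → Fin n → ℝ) (cJ : ℝ) (c : Fin m → ℝ)
    (J : (Fin n → ℝ) → ℝ) (f : Fin m → (Fin n → ℝ) → ℝ)
    (hJ : ∀ x, J x = x ⬝ᵥ AJ.mulVec x + 2 * (bJ ⬝ᵥ x) + cJ)
    (hf : ∀ k x, f k x = x ⬝ᵥ (A k).mulVec x + 2 * (b k ⬝ᵥ x) + c k)
    (hγ' : ∃ γ' : Fin m → ℝ, (∀ k, 0 ≤ γ' k) ∧ γ' ≠ 0 ∧
      (AJ + ∑ k, γ' k • A k).PosSemidef)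
    (xstar : Fin n → ℝ)
    (hfeas : ∀ k, f k xstar ≤ 0)
    (hmin : ∀ x : Fin n → ℝ, (∀ k, f k x ≤ 0) → J xstar ≤ J x)
    (hΩ : Convex ℝ {v : Fin (m + 1) → ℝ | ∃ x : Fin n → ℝ,
      J x - J xstar < v 0 ∧ ∀ k : Fin m, f k x < v k.succ})
    (hslater : ∃ x₀ : Fin n → ℝ, ∀ k, f k x₀ < 0) :
    ∃ γ : Fin m → ℝ, (∀ k, 0 ≤ γ k) ∧
      (AJ + ∑ k, γ k • A k).mulVec xstar + (bJ + ∑ k, γ k • b k) = 0 ∧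
      (∀ k, γ k * f k xstar = 0) ∧
      (AJ + ∑ k, γ k • A k).PosSemidef := by
  exact stmt_3_general hAJ hA hJ hf hfeas hmin
    (hΩ.linear_preimage (Fin.consLinearEquiv ℝ fun _ => ℝ).toLinearMap) hslater
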